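/- Let f : X → S be a finite morphism of schemes and L an invertible O_X-module. Then for every point t ∈ S there exists an open neighborhood U of t such that L restricted to f⁻¹(U) is isomorphic to the structure sheaf O_{f⁻¹(U)}. -/

import Mathlib

open AlgebraicGeometry CategoryTheory Opposite TopologicalSpace
open scoped TensorProduct

namespace Paper

/-- Restriction of a section of the structure sheaf to a smaller open subset. -/
noncomputable def res (X : Scheme) {U V : X.Opens} (h : V ≤ U) (a : Γ(X, U)) : Γ(X, V) :=
  X.presheaf.map (homOfLE h).op a

/-- An invertible `O_X`-module (line bundle) presented by a trivializing open cover and a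
multiplicative cocycle of transition functions. -/
structure LineBundle (X : Scheme) where
  ι : Type
  U : ι → X.Opens
  covers : ∀ x : X, ∃ i, x ∈ U i
  g : ∀ i j : ι, Γ(X, U i ⊓ U j)
  isUnit : ∀ i j, IsUnit (g i j)
  cocycle : ∀ i j k : ι,
    res X (inf_le_left : U i ⊓ U j ⊓ U k ≤ U i ⊓ U j) (g i j) *
      res X (le_inf (inf_le_left.trans inf_le_right) inf_le_right :
        U i ⊓ U j ⊓ U k ≤ U j ⊓ U k) (g j k) =
    res X (le_inf (inf_le_left.trans inf_le_left) inf_le_right :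
        U i ⊓ U j ⊓ U k ≤ U i ⊓ U k) (g i k)

/-- A global section of a line bundle, given in the trivializations. -/
structure LineBundle.GSection {X : Scheme} (L : LineBundle X) where
  s : ∀ i, Γ(X, L.U i)
  compat : ∀ i j, res X inf_le_left (s i) = L.g i j * res X inf_le_right (s j)

/-- A section is regular if multiplication by it is injective, i.e. all its germs are
nonzerodivisors in the stalks. -/
def LineBundle.GSection.IsRegular {X : Scheme} {L : LineBundle X} (t : L.GSection) : Prop :=
  ∀ (i : L.ι) (x : X) (hx : x ∈ L.U i),
    X.presheaf.germ (L.U i) x hx (t.s i) ∈ nonZeroDivisors (X.presheaf.stalk x)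

/-- The zero locus of a section of a line bundle. -/
def LineBundle.GSection.zeroLocus {X : Scheme} {L : LineBundle X} (t : L.GSection) : Set X :=
  {x : X | ∀ (i : L.ι) (hx : x ∈ L.U i),
    ¬ IsUnit (X.presheaf.germ (L.U i) x hx (t.s i))}

/-- An isomorphism of line bundles, given by comparing trivializations. -/
structure LineBundle.Iso {X : Scheme} (L M : LineBundle X) where
  t : ∀ (i : L.ι) (a : M.ι), Γ(X, L.U i ⊓ M.U a)
  isUnit : ∀ i a, IsUnit (t i a)
  compat : ∀ (i j : L.ι) (a b : M.ι),
    res X (inf_le_left : (L.U i ⊓ M.U a) ⊓ (L.U j ⊓ M.U b) ≤ L.U i ⊓ M.U a) (t i a) *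
      res X (le_inf (inf_le_left.trans inf_le_left) (inf_le_right.trans inf_le_left) :
        (L.U i ⊓ M.U a) ⊓ (L.U j ⊓ M.U b) ≤ L.U i ⊓ L.U j) (L.g i j) =
    res X (le_inf (inf_le_left.trans inf_le_right) (inf_le_right.trans inf_le_right) :
        (L.U i ⊓ M.U a) ⊓ (L.U j ⊓ M.U b) ≤ M.U a ⊓ M.U b) (M.g a b) *
      res X (inf_le_right : (L.U i ⊓ M.U a) ⊓ (L.U j ⊓ M.U b) ≤ L.U j ⊓ M.U b) (t j b)

/-!
Near a finite set `T` of points of an affine open `V`, a line bundle is trivial. If `a` is a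
function on `V` and `L` is trivial on `D(a)`, then a generator of `L` over `D(a)` extends to `V`
after multiplication by a power of `a`, which gives a section of `L` over `V` whose nonvanishing
locus is exactly `D(a)`. Some point `p` of `T` is open in `T`, so `D(a)` can be chosen to meet `T`
in `p` only; adding such a section, if necessary, to one that generates `L` on `T \ {p}` yields
one that generates `L` on all of `T`. Applied to the fiber over `t`, this gives a section
generating `L` on an open set containing the fiber, and since `f` is closed that open set contains
`f⁻¹(U)` for a neighborhood `U` of `t`.
-/

lemma exists_opens_inter_subset_singleton {Y : Type*} [TopologicalSpace Y] [T0Space Y]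
    {s : Set Y} (hs : s.Finite) (hne : s.Nonempty) :
    ∃ p ∈ s, ∃ O : Opens Y, p ∈ O ∧ (O : Set Y) ∩ s ⊆ {p} := by
  have := hs.to_subtype
  have := hne.to_subtype
  obtain ⟨p, hp⟩ := exists_open_singleton_of_finite (X := s)
  obtain ⟨O, hO, hOp⟩ := isOpen_induced_iff.1 hp
  have hmem (q : s) : q.1 ∈ O ↔ q = p := Set.ext_iff.1 hOp q
  exact ⟨p, p.2, ⟨O, hO⟩, (hmem p).2 rfl, fun q hq => Subtype.ext_iff.1 ((hmem ⟨q, hq.2⟩).1 hq.1)⟩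

section StructureSheaf

variable {X : Scheme} {U V W : X.Opens}

lemma mem_inf {x : X} (hU : x ∈ U) (hV : x ∈ V) : x ∈ U ⊓ V := ⟨hU, hV⟩

lemma germ_res (h : V ≤ U) (a : Γ(X, U)) (x : X) (hx : x ∈ V) :
    X.presheaf.germ V x hx (res X h a) = X.presheaf.germ U x (h hx) a :=
  X.presheaf.germ_res_apply (homOfLE h) x hx a

lemma section_ext {a b : Γ(X, U)}
    (h : ∀ x hx, X.presheaf.germ U x hx a = X.presheaf.germ U x hx b) : a = b :=
  TopCat.Presheaf.section_ext X.sheaf U a b h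

lemma isUnit_of_isUnit_germ {a : Γ(X, U)} (h : ∀ x hx, IsUnit (X.presheaf.germ U x hx a)) :
    IsUnit a :=
  RingedSpace.isUnit_of_isUnit_germ X.toRingedSpace U a h

lemma mem_basicOpen_res {h : V ≤ U} {a : Γ(X, U)} {x : X} :
    x ∈ X.basicOpen (res X h a) ↔ x ∈ V ∧ x ∈ X.basicOpen a := by
  rw [res, X.basicOpen_res]
  rfl

lemma exists_germ_eq_of_cover {κ : Type*} {B : κ → X.Opens} (hB : ∀ m, B m ≤ W)
    (hcover : ∀ x ∈ W, ∃ m, x ∈ B m) (s : ∀ m, Γ(X, B m))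
    (h : ∀ m n x (hm : x ∈ B m) (hn : x ∈ B n),
      X.presheaf.germ _ x hm (s m) = X.presheaf.germ _ x hn (s n)) :
    ∃ t : Γ(X, W), ∀ m x (hm : x ∈ B m),
      X.presheaf.germ W x (hB m hm) t = X.presheaf.germ _ x hm (s m) := by
  have hcompat : TopCat.Presheaf.IsCompatible X.presheaf B s := fun m n =>
    section_ext fun x hx =>
      (germ_res inf_le_left (s m) x hx).trans <|
        (h m n x hx.1 hx.2).trans (germ_res inf_le_right (s n) x hx).symm
  obtain ⟨t, ht, -⟩ := X.sheaf.existsUnique_gluing' B W (fun m => homOfLE (hB m))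
    (fun x hx => Opens.mem_iSup.2 (hcover x hx)) s hcompat
  exact ⟨t, fun m x hm => by rw [← ht m]; exact (germ_res (hB m) t x hm).symm⟩

lemma exists_germ_eq_pow_mul (hU : IsAffineOpen U) (a : Γ(X, U)) (b : Γ(X, X.basicOpen a)) :
    ∃ (n : ℕ) (c : Γ(X, U)), ∀ x (hx : x ∈ X.basicOpen a),
      X.presheaf.germ U x (X.basicOpen_le a hx) c =
        X.presheaf.germ U x (X.basicOpen_le a hx) a ^ n * X.presheaf.germ _ x hx b := by
  obtain ⟨n, c, hc⟩ := exists_eq_pow_mul_of_isAffineOpen X U hU a b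
  change res X (X.basicOpen_le a) c = res X (X.basicOpen_le a) a ^ n * b at hc
  refine ⟨n, c, fun x hx => ?_⟩
  rw [← germ_res (X.basicOpen_le a) c x hx, hc, map_mul, map_pow, germ_res]

lemma exists_pow_mul_eq_of_germ_eq (hU : IsCompact (U : Set X))
    (hU' : IsQuasiSeparated (U : Set X)) (a : Γ(X, U)) {b c : Γ(X, U)}
    (h : ∀ x (hx : x ∈ X.basicOpen a), X.presheaf.germ U x (X.basicOpen_le a hx) b =
      X.presheaf.germ U x (X.basicOpen_le a hx) c) :
    ∃ n : ℕ, a ^ n * b = a ^ n * c := by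
  refine exists_of_res_eq_of_qcqs hU hU' (section_ext fun x hx => ?_)
  exact (germ_res (X.basicOpen_le a) b x hx).trans <|
    (h x hx).trans (germ_res (X.basicOpen_le a) c x hx).symm

variable (V W) in
/-- Functions on `V` act on functions on `V ⊓ W` through restriction. -/
noncomputable abbrev moduleInf : Module Γ(X, V) Γ(X, V ⊓ W) :=
  Module.compHom _ (X.presheaf.map (homOfLE (inf_le_left : V ⊓ W ≤ V)).op).hom

end StructureSheaf

attribute [local instance] moduleInf

lemma smul_eq_res_mul {X : Scheme} {V W : X.Opens} (a : Γ(X, V)) (b : Γ(X, V ⊓ W)) :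
    a • b = res X inf_le_left a * b :=
  rfl

namespace LineBundle

variable {X : Scheme} (L : LineBundle X)

lemma germ_g_mul_germ_g (i j k : L.ι) (x : X) (hi : x ∈ L.U i) (hj : x ∈ L.U j)
    (hk : x ∈ L.U k) :
    X.presheaf.germ _ x (mem_inf hi hj) (L.g i j) * X.presheaf.germ _ x (mem_inf hj hk) (L.g j k) =
      X.presheaf.germ _ x (mem_inf hi hk) (L.g i k) := by
  have hx : x ∈ L.U i ⊓ L.U j ⊓ L.U k := ⟨⟨hi, hj⟩, hk⟩
  have hcocycle := congrArg (X.presheaf.germ _ x hx) (L.cocycle i j k)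
  rwa [map_mul, germ_res, germ_res, germ_res] at hcocycle

lemma isUnit_germ_g (i j : L.ι) (x : X) (hx : x ∈ L.U i ⊓ L.U j) :
    IsUnit (X.presheaf.germ _ x hx (L.g i j)) :=
  (L.isUnit i j).map _

/-- The sections of the line bundle `L` over an open `V`. A section is encoded by its coordinates
in the trivializations of `L`, which transform by the cocycle. -/
noncomputable def sections (V : X.Opens) :
    Submodule Γ(X, V) (∀ i : L.ι, Γ(X, V ⊓ L.U i)) where
  carrier := {s | ∀ i j : L.ι,
    res X (inf_le_right : V ⊓ (L.U i ⊓ L.U j) ≤ L.U i ⊓ L.U j) (L.g i j) *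
      res X (le_inf inf_le_left (inf_le_right.trans inf_le_right) :
        V ⊓ (L.U i ⊓ L.U j) ≤ V ⊓ L.U j) (s j) =
    res X (le_inf inf_le_left (inf_le_right.trans inf_le_left) :
        V ⊓ (L.U i ⊓ L.U j) ≤ V ⊓ L.U i) (s i)}
  zero_mem' i j := by simp only [res, Pi.zero_apply, map_zero, mul_zero]
  add_mem' {s t} hs ht i j := by
    have hsij := hs i j
    have htij := ht i j
    simp only [res, Pi.add_apply, map_add, mul_add] at hsij htij ⊢
    rw [hsij, htij]
  smul_mem' a s hs i j := section_ext fun x hx => by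
    have hsij := congrArg (X.presheaf.germ _ x hx) (hs i j)
    simp only [Pi.smul_apply, smul_eq_res_mul, map_mul, germ_res] at hsij ⊢
    rw [← hsij, mul_left_comm]

variable {L} {V W : X.Opens}

lemma mem_sections_iff_germ {s : ∀ i : L.ι, Γ(X, V ⊓ L.U i)} :
    s ∈ L.sections V ↔ ∀ i j x (hx : x ∈ V) (hi : x ∈ L.U i) (hj : x ∈ L.U j),
      X.presheaf.germ _ x (mem_inf hi hj) (L.g i j) * X.presheaf.germ _ x (mem_inf hx hj) (s j) =
        X.presheaf.germ _ x (mem_inf hx hi) (s i) := by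
  refine ⟨fun hs i j x hx hi hj => ?_, fun hs i j => section_ext fun x hx => ?_⟩
  · have hxij : x ∈ V ⊓ (L.U i ⊓ L.U j) := ⟨hx, hi, hj⟩
    have hsij := congrArg (X.presheaf.germ _ x hxij) (hs i j)
    rwa [map_mul, germ_res, germ_res, germ_res] at hsij
  · rw [map_mul, germ_res, germ_res, germ_res]
    exact hs i j x hx.1 hx.2.1 hx.2.2

variable (L) in
/-- A chosen trivialization of `L` around `x`; it identifies the stalk of `L` at `x` with that of
the structure sheaf. -/
noncomputable def frameAt (x : X) : L.ι := (L.covers x).choose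

variable (L) in
lemma mem_U_frameAt (x : X) : x ∈ L.U (L.frameAt x) := (L.covers x).choose_spec

/-- The germ of a section of `L` at `x`, read in the trivialization `L.frameAt x`. -/
noncomputable def germ (x : X) (hx : x ∈ V) : L.sections V →+ X.presheaf.stalk x where
  toFun σ := X.presheaf.germ _ x (mem_inf hx (L.mem_U_frameAt x)) (σ.1 (L.frameAt x))
  map_zero' := map_zero _
  map_add' _ _ := map_add _ _ _

lemma germ_coord (σ : L.sections V) (i : L.ι) (x : X) (hx : x ∈ V) (hi : x ∈ L.U i) :
    X.presheaf.germ _ x (mem_inf hx hi) (σ.1 i) =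
      X.presheaf.germ _ x (mem_inf hi (L.mem_U_frameAt x)) (L.g i (L.frameAt x)) * germ x hx σ :=
  (mem_sections_iff_germ.1 σ.2 i (L.frameAt x) x hx hi (L.mem_U_frameAt x)).symm

lemma isUnit_germ_coord_iff (σ : L.sections V) (i : L.ι) (x : X) (hx : x ∈ V)
    (hi : x ∈ L.U i) :
    IsUnit (X.presheaf.germ _ x (mem_inf hx hi) (σ.1 i)) ↔ IsUnit (germ x hx σ) := by
  rw [germ_coord σ i x hx hi, IsUnit.mul_iff, and_iff_right (L.isUnit_germ_g _ _ _ _)]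

lemma sections_ext {σ τ : L.sections V} (h : ∀ x hx, germ x hx σ = germ x hx τ) : σ = τ :=
  Subtype.ext <| funext fun i => section_ext fun x hx => by
    rw [germ_coord σ i x hx.1 hx.2, germ_coord τ i x hx.1 hx.2, h x hx.1]

lemma germ_smul (a : Γ(X, V)) (σ : L.sections V) (x : X) (hx : x ∈ V) :
    germ x hx (a • σ) = X.presheaf.germ V x hx a * germ x hx σ :=
  (map_mul (X.presheaf.germ _ x _).hom _ _).trans <|
    congrArg (· * germ x hx σ) (germ_res inf_le_left a x _)

lemma germ_pow_smul (a : Γ(X, V)) (n : ℕ) (σ : L.sections V) (x : X) (hx : x ∈ V) :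
    germ x hx (a ^ n • σ) = X.presheaf.germ V x hx a ^ n * germ x hx σ := by
  rw [germ_smul, map_pow]

/-- Restriction of a section of `L` to a smaller open. -/
noncomputable def restrict (h : W ≤ V) (σ : L.sections V) : L.sections W :=
  ⟨fun i => res X (inf_le_inf_right _ h) (σ.1 i), mem_sections_iff_germ.2 fun i j x hx hi hj => by
    rw [germ_res, germ_res]
    exact mem_sections_iff_germ.1 σ.2 i j x (h hx) hi hj⟩

lemma germ_restrict (h : W ≤ V) (σ : L.sections V) (x : X) (hx : x ∈ W) :
    germ x hx (restrict h σ) = germ x (h hx) σ :=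
  germ_res _ _ _ _

/-- The section over `W` whose coordinate in the `k`-th trivialization is the function `a`. -/
noncomputable def ofCoord {k : L.ι} (hW : W ≤ L.U k) (a : Γ(X, W)) : L.sections W :=
  ⟨fun i => res X (le_inf inf_le_right (inf_le_left.trans hW)) (L.g i k) * res X inf_le_left a,
    mem_sections_iff_germ.2 fun i j x hx hi hj => by
      simp only [map_mul, germ_res]
      rw [← mul_assoc, L.germ_g_mul_germ_g i j k x hi hj (hW hx)]⟩

lemma germ_ofCoord {k : L.ι} (hW : W ≤ L.U k) (a : Γ(X, W)) (x : X) (hx : x ∈ W) :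
    germ x hx (ofCoord hW a) =
      X.presheaf.germ _ x (mem_inf (L.mem_U_frameAt x) (hW hx)) (L.g (L.frameAt x) k) *
        X.presheaf.germ W x hx a := by
  refine (map_mul (X.presheaf.germ _ x _).hom _ _).trans ?_
  rw [germ_res, germ_res]

lemma ofCoord_coord {k : L.ι} (hW : W ≤ L.U k) (σ : L.sections W) :
    ofCoord hW (res X (le_inf le_rfl hW) (σ.1 k)) = σ :=
  sections_ext fun x hx => by
    rw [germ_ofCoord, germ_res]
    exact mem_sections_iff_germ.1 σ.2 _ _ x hx (L.mem_U_frameAt x) (hW hx)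

lemma exists_sections_germ_eq_of_cover {κ : Type*} {B : κ → X.Opens} (hB : ∀ m, B m ≤ V)
    (hcover : ∀ x ∈ V, ∃ m, x ∈ B m) (σ : ∀ m, L.sections (B m))
    (h : ∀ m n x (hm : x ∈ B m) (hn : x ∈ B n), germ x hm (σ m) = germ x hn (σ n)) :
    ∃ τ : L.sections V, ∀ m x (hm : x ∈ B m), germ x (hB m hm) τ = germ x hm (σ m) := by
  have hcoord (i : L.ι) : ∃ t : Γ(X, V ⊓ L.U i), ∀ m x (hx : x ∈ B m ⊓ L.U i),
      X.presheaf.germ _ x (mem_inf (hB m hx.1) hx.2) t = X.presheaf.germ _ x hx ((σ m).1 i) :=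
    exists_germ_eq_of_cover (fun m => inf_le_inf_right _ (hB m))
      (fun x hx => (hcover x hx.1).imp fun m hm => ⟨hm, hx.2⟩) (fun m => (σ m).1 i)
      fun m n x hm hn => by
        rw [germ_coord (σ m) i x hm.1 hm.2, germ_coord (σ n) i x hn.1 hn.2, h m n x hm.1 hn.1]
  choose t ht using hcoord
  refine ⟨⟨t, mem_sections_iff_germ.2 fun i j x hx hi hj => ?_⟩,
    fun m x hm => ht _ m x ⟨hm, L.mem_U_frameAt x⟩⟩
  obtain ⟨m, hm⟩ := hcover x hx
  rw [ht i m x ⟨hm, hi⟩, ht j m x ⟨hm, hj⟩]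
  exact mem_sections_iff_germ.1 (σ m).2 i j x hm hi hj

lemma exists_sections_germ_eq_pow_mul_of_le_U {k : L.ι} (hW : IsAffineOpen W) (hWk : W ≤ L.U k)
    (a : Γ(X, W)) (σ : L.sections (X.basicOpen a)) :
    ∃ (n : ℕ) (τ : L.sections W), ∀ x (hx : x ∈ X.basicOpen a),
      germ x (X.basicOpen_le a hx) τ =
        X.presheaf.germ W x (X.basicOpen_le a hx) a ^ n * germ x hx σ := by
  have hak : X.basicOpen a ≤ L.U k := (X.basicOpen_le a).trans hWk
  obtain ⟨n, c, hc⟩ := exists_germ_eq_pow_mul hW a (res X (le_inf le_rfl hak) (σ.1 k))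
  refine ⟨n, ofCoord hWk c, fun x hx => ?_⟩
  rw [← ofCoord_coord hak σ, germ_ofCoord, germ_ofCoord, hc x hx, mul_left_comm]

lemma exists_pow_smul_eq_of_le_U {k : L.ι} (hW : IsCompact (W : Set X))
    (hW' : IsQuasiSeparated (W : Set X)) (hWk : W ≤ L.U k) (a : Γ(X, W)) {σ τ : L.sections W}
    (h : ∀ x (hx : x ∈ X.basicOpen a),
      germ x (X.basicOpen_le a hx) σ = germ x (X.basicOpen_le a hx) τ) :
    ∃ n : ℕ, a ^ n • σ = a ^ n • τ := by
  obtain ⟨n, hn⟩ := exists_pow_mul_eq_of_germ_eq hW hW' a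
    (b := res X (le_inf le_rfl hWk) (σ.1 k)) (c := res X (le_inf le_rfl hWk) (τ.1 k))
    fun x hx => by
      have hxW := X.basicOpen_le a hx
      rw [germ_res, germ_res, germ_coord σ k x hxW (hWk hxW), germ_coord τ k x hxW (hWk hxW),
        h x hx]
  refine ⟨n, sections_ext fun x hx => ?_⟩
  have hnx := congrArg (X.presheaf.germ W x hx) hn
  rw [map_mul, map_mul, map_pow] at hnx
  rw [germ_pow_smul, germ_pow_smul, ← ofCoord_coord hWk σ, ← ofCoord_coord hWk τ, germ_ofCoord,
    germ_ofCoord, mul_left_comm, hnx, mul_left_comm]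

variable (L) in
lemma exists_finset_affine_cover (hV : IsCompact (V : Set X)) :
    ∃ 𝒲 : Finset X.Opens,
      (∀ W ∈ 𝒲, IsAffineOpen W ∧ W ≤ V ∧ ∃ i, W ≤ L.U i) ∧ ∀ x ∈ V, ∃ W ∈ 𝒲, x ∈ W := by
  have hlocal (x : X) (hx : x ∈ V) :
      ∃ W : X.Opens, (IsAffineOpen W ∧ W ≤ V ∧ ∃ i, W ≤ L.U i) ∧ x ∈ W := by
    obtain ⟨W, hW, hxW, hWV⟩ := exists_isAffineOpen_mem_and_subset (U := V ⊓ L.U (L.frameAt x))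
      ⟨hx, L.mem_U_frameAt x⟩
    exact ⟨W, ⟨hW, fun y hy => (hWV hy).1, _, fun y hy => (hWV hy).2⟩, hxW⟩
  obtain ⟨𝒲, h𝒲, hfin, hcover⟩ := hV.elim_finite_subcover_image
    (b := {W : X.Opens | IsAffineOpen W ∧ W ≤ V ∧ ∃ i, W ≤ L.U i}) (c := fun W => (W : Set X))
    (fun W _ => W.isOpen) fun x hx => by
      obtain ⟨W, hW, hxW⟩ := hlocal x hx
      exact Set.mem_iUnion₂.2 ⟨W, hW, hxW⟩
  refine ⟨hfin.toFinset, fun W hW => h𝒲 (hfin.mem_toFinset.1 hW), fun x hx => ?_⟩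
  obtain ⟨W, hW, hxW⟩ := Set.mem_iUnion₂.1 (hcover hx)
  exact ⟨W, hfin.mem_toFinset.2 hW, hxW⟩

lemma eventually_exists_sections_germ_eq_pow_mul_of_le_U {k : L.ι} (hW : IsAffineOpen W)
    (hWk : W ≤ L.U k) (hWV : W ≤ V) (a : Γ(X, V)) (σ : L.sections (X.basicOpen a)) :
    ∀ᶠ n in Filter.atTop, ∃ τ : L.sections W, ∀ x (hxW : x ∈ W) (hxa : x ∈ X.basicOpen a),
      germ x hxW τ = X.presheaf.germ V x (hWV hxW) a ^ n * germ x hxa σ := by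
  obtain ⟨m, τ, hτ⟩ := exists_sections_germ_eq_pow_mul_of_le_U hW hWk (res X hWV a)
    (restrict (fun x hx => (mem_basicOpen_res.1 hx).2) σ)
  filter_upwards [Filter.eventually_ge_atTop m] with n hmn
  refine ⟨res X hWV a ^ (n - m) • τ, fun x hxW hxa => ?_⟩
  rw [germ_pow_smul, hτ x (mem_basicOpen_res.2 ⟨hxW, hxa⟩), germ_restrict, ← mul_assoc, ← pow_add,
    Nat.sub_add_cancel hmn, germ_res]

lemma eventually_pow_mul_germ_eq_of_le_U {k : L.ι} {W' : X.Opens} (hWV : W ≤ V) (hWk : W ≤ L.U k)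
    (hcompact : IsCompact ((W ⊓ W' : X.Opens) : Set X))
    (hqs : IsQuasiSeparated ((W ⊓ W' : X.Opens) : Set X)) (a : Γ(X, V))
    {σ : L.sections W} {τ : L.sections W'}
    (h : ∀ x (hx : x ∈ W) (hx' : x ∈ W'), x ∈ X.basicOpen a → germ x hx σ = germ x hx' τ) :
    ∀ᶠ n in Filter.atTop, ∀ x (hx : x ∈ W) (hx' : x ∈ W'),
      X.presheaf.germ V x (hWV hx) a ^ n * germ x hx σ =
        X.presheaf.germ V x (hWV hx) a ^ n * germ x hx' τ := by
  obtain ⟨m, hm⟩ := exists_pow_smul_eq_of_le_U hcompact hqs (inf_le_left.trans hWk)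
    (res X (inf_le_left.trans hWV) a) (σ := restrict inf_le_left σ)
    (τ := restrict inf_le_right τ) fun x hx => by
      obtain ⟨hxW, hxa⟩ := mem_basicOpen_res.1 hx
      rw [germ_restrict, germ_restrict, h x hxW.1 hxW.2 hxa]
  filter_upwards [Filter.eventually_ge_atTop m] with n hmn x hx hx'
  have hmx := congrArg (germ x (mem_inf hx hx')) hm
  rw [germ_pow_smul, germ_pow_smul, germ_restrict, germ_restrict, germ_res] at hmx
  rw [← Nat.sub_add_cancel hmn, pow_add, mul_assoc, mul_assoc, hmx]

lemma exists_sections_germ_eq_pow_mul (hV : IsCompact (V : Set X))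
    (hV' : IsQuasiSeparated (V : Set X)) (a : Γ(X, V)) (σ : L.sections (X.basicOpen a)) :
    ∃ (n : ℕ) (τ : L.sections V), ∀ x (hx : x ∈ X.basicOpen a),
      germ x (X.basicOpen_le a hx) τ =
        X.presheaf.germ V x (X.basicOpen_le a hx) a ^ n * germ x hx σ := by
  obtain ⟨𝒲, h𝒲, hcover⟩ := exists_finset_affine_cover L hV
  choose haffine hle k hk using h𝒲
  obtain ⟨n, hn⟩ := (Filter.eventually_all.2 fun W : 𝒲 =>
    eventually_exists_sections_germ_eq_pow_mul_of_le_U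
      (haffine W W.2) (hk W W.2) (hle W W.2) a σ).exists
  choose τ hτ using hn
  have hoverlap (W W' : 𝒲) : IsCompact ((W.1 ⊓ W'.1 : X.Opens) : Set X) :=
    hV' _ _ (hle W W.2) W.1.isOpen (haffine W W.2).isCompact
      (hle W' W'.2) W'.1.isOpen (haffine W' W'.2).isCompact
  obtain ⟨m, hm⟩ := (Filter.eventually_all.2 fun W : 𝒲 => Filter.eventually_all.2 fun W' : 𝒲 =>
    eventually_pow_mul_germ_eq_of_le_U (hle W W.2) (hk W W.2) (hoverlap W W')
      (hV'.of_subset (Set.inter_subset_left.trans (hle W W.2))) a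
      fun x hx hx' hxa => (hτ W x hx hxa).trans (hτ W' x hx' hxa).symm).exists
  obtain ⟨ρ, hρ⟩ := exists_sections_germ_eq_of_cover (fun W : 𝒲 => hle W W.2)
    (fun x hx => let ⟨W, hW, hxW⟩ := hcover x hx; ⟨⟨W, hW⟩, hxW⟩)
    (fun W => res X (hle W W.2) a ^ m • τ W) fun W W' x hx hx' => by
      rw [germ_pow_smul, germ_pow_smul, germ_res, germ_res, hm W W' x hx hx']
  refine ⟨m + n, ρ, fun x hx => ?_⟩
  obtain ⟨W, hW, hxW⟩ := hcover x (X.basicOpen_le a hx)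
  rw [hρ ⟨W, hW⟩ x hxW, germ_pow_smul, germ_res, hτ ⟨W, hW⟩ x hxW hx, pow_add, mul_assoc]

/-- The open set of points at which a section of `L` generates the stalk of `L`. -/
noncomputable def nonvanishingLocus (σ : L.sections V) : X.Opens :=
  ⨆ i, X.basicOpen (σ.1 i)

lemma nonvanishingLocus_le (σ : L.sections V) : nonvanishingLocus σ ≤ V :=
  iSup_le fun i => (X.basicOpen_le (σ.1 i)).trans inf_le_left

lemma mem_nonvanishingLocus_iff {σ : L.sections V} {x : X} (hx : x ∈ V) :
    x ∈ nonvanishingLocus σ ↔ IsUnit (germ x hx σ) := by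
  refine Opens.mem_iSup.trans ⟨fun ⟨i, hi⟩ => ?_, fun h => ⟨L.frameAt x, ?_⟩⟩
  · have hxi := X.basicOpen_le (σ.1 i) hi
    exact (isUnit_germ_coord_iff σ i x hx hxi.2).1 ((X.mem_basicOpen _ x hxi).1 hi)
  · exact (X.mem_basicOpen _ x (mem_inf hx (L.mem_U_frameAt x))).2 h

lemma isUnit_coord_restrict {σ : L.sections V} (hW : W ≤ nonvanishingLocus σ) (i : L.ι) :
    IsUnit ((restrict (hW.trans (nonvanishingLocus_le σ)) σ).1 i) :=
  isUnit_of_isUnit_germ fun x hx =>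
    (isUnit_germ_coord_iff _ i x hx.1 hx.2).2 <| by
      rw [germ_restrict]
      exact (mem_nonvanishingLocus_iff _).1 (hW hx.1)

lemma mem_nonvanishingLocus_add {σ τ : L.sections V} {x : X} (hσ : x ∈ nonvanishingLocus σ)
    (hτ : x ∉ nonvanishingLocus τ) : x ∈ nonvanishingLocus (σ + τ) := by
  have hx := nonvanishingLocus_le σ hσ
  rw [mem_nonvanishingLocus_iff hx] at hσ hτ ⊢
  rw [map_add]
  rw [← add_neg_cancel_right (germ x hx σ) (germ x hx τ)] at hσ
  exact (IsLocalRing.isUnit_or_isUnit_of_isUnit_add hσ).resolve_right (mt (IsUnit.neg_iff _).1 hτ)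

lemma exists_nonvanishingLocus_eq_basicOpen (hV : IsCompact (V : Set X))
    (hV' : IsQuasiSeparated (V : Set X)) (a : Γ(X, V)) {i : L.ι} (ha : X.basicOpen a ≤ L.U i) :
    ∃ σ : L.sections V, nonvanishingLocus σ = X.basicOpen a := by
  obtain ⟨n, τ, hτ⟩ := exists_sections_germ_eq_pow_mul hV hV' a (ofCoord ha 1)
  -- The extra factor `a` makes the section vanish off `D(a)` when `n = 0`.
  refine ⟨a • τ, Opens.ext <| Set.ext fun x => ⟨fun hx => ?_, fun hx => ?_⟩⟩
  · have hxV := nonvanishingLocus_le _ hx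
    rw [SetLike.mem_coe, mem_nonvanishingLocus_iff hxV, germ_smul] at hx
    exact (X.mem_basicOpen a x hxV).2 (isUnit_of_mul_isUnit_left hx)
  · have hxV := X.basicOpen_le a hx
    have hax := (X.mem_basicOpen a x hxV).1 hx
    rw [SetLike.mem_coe, mem_nonvanishingLocus_iff hxV, germ_smul, hτ x hx, germ_ofCoord, map_one,
      mul_one]
    exact hax.mul ((hax.pow n).mul (L.isUnit_germ_g _ _ _ _))

lemma exists_sections_subset_nonvanishingLocus (hV : IsAffineOpen V) (T : Finset X)
    (hT : (T : Set X) ⊆ V) : ∃ σ : L.sections V, (T : Set X) ⊆ nonvanishingLocus σ := by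
  classical
  induction T using Finset.strongInduction with | H T ih =>
  rcases T.eq_empty_or_nonempty with rfl | hne
  · exact ⟨0, by simp⟩
  obtain ⟨p, hpT, O, hpO, hO⟩ := exists_opens_inter_subset_singleton T.finite_toSet hne
  obtain ⟨σ, hσ⟩ := ih (T.erase p) (Finset.erase_ssubset hpT)
    fun q hq => hT (Finset.mem_of_mem_erase hq)
  have hσ_of_ne {q : X} (hqT : q ∈ T) (hqp : q ≠ p) : q ∈ nonvanishingLocus σ :=
    hσ (Finset.mem_erase.2 ⟨hqp, hqT⟩)
  by_cases hσp : p ∈ nonvanishingLocus σ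
  · exact ⟨σ, fun q hq => (eq_or_ne q p).elim (fun h => h ▸ hσp) (hσ_of_ne hq)⟩
  obtain ⟨a, ha, hpa⟩ := hV.exists_basicOpen_le (V := L.U (L.frameAt p) ⊓ O)
    ⟨p, L.mem_U_frameAt p, hpO⟩ (hT hpT)
  obtain ⟨τ, hτ⟩ := exists_nonvanishingLocus_eq_basicOpen hV.isCompact hV.isQuasiSeparated a
    (ha.trans inf_le_left)
  refine ⟨σ + τ, fun q hq => ?_⟩
  rcases eq_or_ne q p with rfl | hqp
  · rw [add_comm]
    exact mem_nonvanishingLocus_add (hτ ▸ hpa) hσp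
  · exact mem_nonvanishingLocus_add (hσ_of_ne hq hqp) fun hqτ =>
      hqp (hO ⟨(ha (hτ ▸ hqτ)).2, hq⟩)

end LineBundle

theorem stmt_8_general {X S : Scheme} {f : X ⟶ S} (hf : IsClosedMap f) (L : LineBundle X) {t : S}
    (hfin : (f ⁻¹' {t}).Finite) {V : X.Opens} (hV : IsAffineOpen V) (hfV : f ⁻¹' {t} ⊆ V) :
    ∃ U : S.Opens, t ∈ U ∧ ∃ σ : L.sections (f ⁻¹ᵁ U), ∀ i, IsUnit (σ.1 i) := by
  obtain ⟨σ, hσ⟩ := LineBundle.exists_sections_subset_nonvanishingLocus (L := L) hV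
    hfin.toFinset (by rwa [hfin.coe_toFinset])
  rw [hfin.coe_toFinset] at hσ
  let U : S.Opens := ⟨Set.kernImage f (LineBundle.nonvanishingLocus σ),
    isClosedMap_iff_kernImage.1 hf (LineBundle.nonvanishingLocus σ).isOpen⟩
  have hU : f ⁻¹ᵁ U ≤ LineBundle.nonvanishingLocus σ := fun x hx => hx rfl
  exact ⟨U, fun x hx => hσ hx, _, LineBundle.isUnit_coord_restrict hU⟩

/-- Let `f : X → S` be a finite morphism of schemes and `L` an invertible
`O_X`-module.  Then for every point `t ∈ S` there exists an open neighbourhood `U` of `t`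
such that `L` restricted to `f⁻¹(U)` is trivial, i.e. `L` admits a unit trivializing section
over `f⁻¹(U)` (a family of units `s i` on `f⁻¹U ⊓ U i` transforming the cocycle of `L` into a
coboundary). -/
theorem stmt_8 {X S : Scheme} (f : X ⟶ S) [IsFinite f] (L : Paper.LineBundle X) (t : S) :
    ∃ U : S.Opens, t ∈ U ∧
      ∃ s : ∀ i : L.ι, Γ(X, f ⁻¹ᵁ U ⊓ L.U i),
        (∀ i, IsUnit (s i)) ∧
        ∀ i j : L.ι,
          Paper.res X (inf_le_right : f ⁻¹ᵁ U ⊓ (L.U i ⊓ L.U j) ≤ L.U i ⊓ L.U j) (L.g i j) *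
            Paper.res X (le_inf inf_le_left (inf_le_right.trans inf_le_right) :
              f ⁻¹ᵁ U ⊓ (L.U i ⊓ L.U j) ≤ f ⁻¹ᵁ U ⊓ L.U j) (s j) =
          Paper.res X (le_inf inf_le_left (inf_le_right.trans inf_le_left) :
              f ⁻¹ᵁ U ⊓ (L.U i ⊓ L.U j) ≤ f ⁻¹ᵁ U ⊓ L.U i) (s i) := by
  obtain ⟨W, hW, htW, -⟩ := exists_isAffineOpen_mem_and_subset (U := ⊤) (Opens.mem_top t)
  obtain ⟨U, htU, σ, hσ⟩ := stmt_8_general f.isClosedMap L (f.finite_preimage_singleton t)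
    (hW.preimage f) (Set.preimage_mono (Set.singleton_subset_iff.2 htW))
  exact ⟨U, htU, σ.1, hσ, σ.2⟩

end Paper
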